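/- arXiv:2408.17232 — 2 statements merged into one kernel-verified Lean document; each statement's English description precedes it below -/
import Mathlib

section
/- For all integers n ≥ 1, k ≥ 1 and q ≥ 0 with n − k − q ≥ 0 and 2n − k − 2q − 1 ≥ 0, the total number C_{n,k,q} of bubbles of size q found amongst all crystallized diagrams on n chords that contain exactly k short chords is C_{n,k,q} = (k+1) · (2n−k−q−1)!/(2n−k−2q−1)! · Σ (w_1! · w_2! ⋯ w_k!) / (p_1! ⋯ p_{k(k−1)/2}!), where the sum ranges over all tuples (p_1,…,p_{k(k−1)/2}) of nonnegative integers with p_1 + ⋯ + p_{k(k−1)/2} = n − k − q, and w_j = Σ_{i : edge i of K_k is incident to vertex j} p_i for each vertex j of the complete graph K_k. -/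
namespace ChordBubbles

/-- A linear chord diagram with `n` chords: a fixed-point-free involution of `Fin (2*n)`. -/
def IsDiagram (n : ℕ) (f : Equiv.Perm (Fin (2 * n))) : Prop :=
  (∀ i, f (f i) = i) ∧ ∀ i, f i ≠ i

/-- Vertex `i` is an endpoint of a short chord (a chord joining adjacent vertices). -/
def ShortEnd (n : ℕ) (f : Equiv.Perm (Fin (2 * n))) (i : Fin (2 * n)) : Prop :=
  (f i).val = i.val + 1 ∨ (f i).val + 1 = i.val

/-- `[a, b]` delimits a bubble: a maximal nonempty interval of vertices none of which is an
endpoint of a short chord. -/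
def IsBubble (n : ℕ) (f : Equiv.Perm (Fin (2 * n))) (a b : ℕ) : Prop :=
  a ≤ b ∧ b < 2 * n ∧
  (∀ i : Fin (2 * n), a ≤ i.val → i.val ≤ b → ¬ ShortEnd n f i) ∧
  (a = 0 ∨ ∃ j : Fin (2 * n), j.val + 1 = a ∧ ShortEnd n f j) ∧
  (b + 1 = 2 * n ∨ ∃ j : Fin (2 * n), j.val = b + 1 ∧ ShortEnd n f j)

/-- The size (number of vertices) of the bubble `[a, b]`. -/
def bubbleSize (a b : ℕ) : ℕ := b + 1 - a

/-- The number of bridges of the bubble `[a, b]` under the diagram `f`: the number of chords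
joining a vertex inside the bubble to one outside it. -/
noncomputable def bridges (n : ℕ) (f : Equiv.Perm (Fin (2 * n))) (a b : ℕ) : ℕ :=
  Nat.card {i : Fin (2 * n) // (a ≤ i.val ∧ i.val ≤ b) ∧ ¬ (a ≤ (f i).val ∧ (f i).val ≤ b)}

/-- `N n q b` : the number of pairs (diagram, bubble) where the diagram has `n` chords and the
bubble has size `q` and exactly `b` bridges. -/
noncomputable def N (n q b : ℕ) : ℕ :=
  Nat.card {p : Equiv.Perm (Fin (2 * n)) × ℕ × ℕ //
    IsDiagram n p.1 ∧ IsBubble n p.1 p.2.1 p.2.2 ∧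
    bubbleSize p.2.1 p.2.2 = q ∧ bridges n p.1 p.2.1 p.2.2 = b}

/-- A diagram is crystallized when all its bubbles are empty, i.e., no chord joins two vertices
lying in the same bubble. -/
def Crystallized (n : ℕ) (f : Equiv.Perm (Fin (2 * n))) : Prop :=
  ∀ a b, IsBubble n f a b → ∀ i : Fin (2 * n),
    a ≤ i.val → i.val ≤ b → ¬ (a ≤ (f i).val ∧ (f i).val ≤ b)

/-- The number of short chords of a diagram. -/
noncomputable def shortChords (n : ℕ) (f : Equiv.Perm (Fin (2 * n))) : ℕ :=
  Nat.card {i : Fin (2 * n) // (f i).val = i.val + 1}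

/-- `R n k` : the number of crystallized diagrams with `n` chords, exactly `k` of them short. -/
noncomputable def R (n k : ℕ) : ℕ :=
  Nat.card {f : Equiv.Perm (Fin (2 * n)) //
    IsDiagram n f ∧ Crystallized n f ∧ shortChords n f = k}

/-- A bubble of size 0: a cut position `a` with no vertices between its two delimiters, each of
which is either an end of the diagram or a short chord (a short chord ending at `a-1` on the
left, a short chord starting at `a` on the right). -/
def IsGap (n : ℕ) (f : Equiv.Perm (Fin (2 * n))) (a : ℕ) : Prop :=
  a ≤ 2 * n ∧
  (a = 0 ∨ ∃ j : Fin (2 * n), j.val + 1 = a ∧ (f j).val + 1 = j.val) ∧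
  (a = 2 * n ∨ ∃ j : Fin (2 * n), j.val = a ∧ (f j).val = j.val + 1)

/-- `C n k q` : the number of pairs (diagram, bubble of size `q`) where the diagram is a
crystallized diagram with `n` chords, exactly `k` of them short.  For `q = 0` the bubbles are
the empty gaps between consecutive short chords or between an end of the diagram and the
nearest short chord. -/
noncomputable def C (n k q : ℕ) : ℕ :=
  if q = 0 then
    Nat.card {p : Equiv.Perm (Fin (2 * n)) × ℕ //
      IsDiagram n p.1 ∧ Crystallized n p.1 ∧ shortChords n p.1 = k ∧ IsGap n p.1 p.2}
  else
    Nat.card {p : Equiv.Perm (Fin (2 * n)) × ℕ × ℕ //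
      IsDiagram n p.1 ∧ Crystallized n p.1 ∧ shortChords n p.1 = k ∧
      IsBubble n p.1 p.2.1 p.2.2 ∧ bubbleSize p.2.1 p.2.2 = q}

/-- The edge set of the complete graph on `m` vertices. -/
def Edge (m : ℕ) := {e : Sym2 (Fin m) // ¬ e.IsDiag}

instance (m : ℕ) : Fintype (Edge m) := Subtype.fintype _
instance (m : ℕ) : DecidableEq (Edge m) := Subtype.instDecidableEq

/-- `wvec p j` : the entry of `w = B p` at the vertex `j`, where `B` is the incidence matrix of
the complete graph; i.e., the sum of `p` over the edges incident to `j`. -/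
def wvec {m : ℕ} (p : Edge m → ℕ) (j : Fin m) : ℕ :=
  ∑ e : Edge m, if j ∈ e.val then p e else 0

/-! A diagram with `k` short chords is a sequence of `k + 1` bubbles, possibly empty, separated by
the short chords, so the diagrams are classified by the bubble sizes `s 0, …, s k`. A crystallized
one is a perfect matching of the remaining points in which every chord joins different bubbles. If
`p e` chords join the two bubbles of each edge `e` of `K_{k+1}`, then `wvec p = s`, and exactly
`∏ⱼ (s j)! / ∏ₑ (p e)!` matchings have this `p`. Requiring bubble `v` to have size `q` fixes the
degree of `v`; removing `v` from the multigraph `p` leaves a multigraph on `K_k`, and summing over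
the neighbours of `v` by Vandermonde's identity for multisets gives the same factor for all of them.
The result does not depend on `v`, whence the factor `k + 1`. -/

open Finset
open scoped Nat

section Multigraphs

variable {m : ℕ}

/-- The edge of the complete graph joining two distinct vertices. -/
def edge (i j : Fin m) (hij : i ≠ j) : Edge m := ⟨s(i, j), by simpa using hij⟩

/-- The multiplicity of the edge `ij` in the multigraph `p`, extended by `0` to `i = j`. -/
def mult (p : Edge m → ℕ) (i j : Fin m) : ℕ := if h : i ≠ j then p (edge i j h) else 0

/-- The weight `∏ⱼ wⱼ! / ∏ₑ pₑ!` of a multigraph `p` on the vertices of `K_m`. When the points of a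
set are coloured by `Fin m`, with `wⱼ` points of colour `j`, it is the number of perfect matchings
having, for each edge `e = ij`, exactly `p e` chords between the colours `i` and `j`. -/
def weight (p : Edge m → ℕ) : ℚ := (∏ j, ((wvec p j)! : ℚ)) / ∏ e, ((p e)! : ℚ)

/-- The multigraphs on the vertices of `K_m` with degree sequence `d`. -/
def multigraphs (d : Fin m → ℕ) : Finset (Edge m → ℕ) :=
  {p ∈ piAntidiag univ ((∑ i, d i) / 2) | wvec p = d}

lemma sum_wvec (p : Edge m → ℕ) : ∑ j, wvec p j = 2 * ∑ e, p e := by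
  simp only [wvec]
  rw [sum_comm, mul_sum]
  refine sum_congr rfl fun e _ ↦ ?_
  have hends : ({j | j ∈ e.val} : Finset (Fin m)) = e.val.toFinset := by ext; simp
  rw [← sum_filter, hends, sum_const, Sym2.card_toFinset_of_not_isDiag _ e.2, smul_eq_mul]

lemma mem_multigraphs {d : Fin m → ℕ} {p : Edge m → ℕ} : p ∈ multigraphs d ↔ wvec p = d := by
  simp only [multigraphs, mem_filter, mem_piAntidiag, mem_univ, implies_true, and_true,
    and_iff_right_iff_imp]
  rintro rfl
  rw [sum_wvec]
  exact (Nat.mul_div_cancel_left _ two_pos).symm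

lemma mult_eq_sum (p : Edge m → ℕ) (i j : Fin m) :
    mult p i j = ∑ e : Edge m, if e.val = s(i, j) then p e else 0 := by
  unfold mult
  split_ifs with h
  · have hedge (e : Edge m) : e.val = s(i, j) ↔ e = edge i j h :=
      ⟨fun he ↦ Subtype.ext he, fun he ↦ congrArg Subtype.val he⟩
    simp only [hedge, sum_ite_eq', mem_univ, if_true]
  · refine (sum_eq_zero fun e _ ↦ if_neg fun he : e.val = s(i, j) ↦ e.2 ?_).symm
    rw [he]
    exact not_not.1 h

lemma sum_mult (p : Edge m → ℕ) (i : Fin m) : ∑ j, mult p i j = wvec p i := by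
  simp only [mult_eq_sum, wvec]
  rw [sum_comm]
  refine sum_congr rfl fun e _ ↦ ?_
  split_ifs with hi
  · obtain ⟨a, ha⟩ := Sym2.mem_iff_exists.1 hi
    simp only [ha, Sym2.congr_right, sum_ite_eq, mem_univ, if_true]
  · exact sum_eq_zero fun j _ ↦ if_neg fun he : e.val = s(i, j) ↦ hi (he ▸ Sym2.mem_mk_left i j)

lemma mult_comm (p : Edge m → ℕ) (i j : Fin m) : mult p i j = mult p j i := by
  simp only [mult_eq_sum, Sym2.eq_swap]

lemma mult_le_wvec (p : Edge m → ℕ) (i j : Fin m) : mult p i j ≤ wvec p j := by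
  rw [mult_comm, ← sum_mult]
  exact single_le_sum (fun _ _ ↦ Nat.zero_le _) (mem_univ i)

lemma wvec_add (p p' : Edge m → ℕ) : wvec (p + p') = wvec p + wvec p' := by
  ext j
  simp only [wvec, Pi.add_apply, ← sum_add_distrib, ite_add_zero]

lemma wvec_single_edge {i j : Fin m} (hij : i ≠ j) :
    wvec (Pi.single (edge i j hij) 1 : Edge m → ℕ) = Pi.single i 1 + Pi.single j 1 := by
  ext t
  have hmem : t ∈ (edge i j hij).val ↔ t = i ∨ t = j := Sym2.mem_iff
  rw [wvec, sum_eq_single (edge i j hij)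
    (fun e _ he ↦ by rw [Pi.single_eq_of_ne he, ite_self]) (by simp), Pi.single_eq_same]
  simp only [hmem, Pi.add_apply, Pi.single_apply]
  grind

lemma prod_factorial_add_single {ι : Type*} [Fintype ι] [DecidableEq ι] (p : ι → ℕ) (a : ι) :
    ∏ i, ((p + Pi.single a 1 : ι → ℕ) i)! = (p a + 1) * ∏ i, (p i)! := by
  rw [← mul_prod_erase univ _ (mem_univ a), ← mul_prod_erase univ (fun i ↦ (p i)!) (mem_univ a),
    ← mul_assoc]
  congr 1
  · simp [Nat.factorial_succ]
  · refine prod_congr rfl fun i hi ↦ ?_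
    simp [ne_of_mem_erase hi]

lemma mult_add_single_edge {i j : Fin m} (hij : i ≠ j) (p : Edge m → ℕ) :
    mult (p + Pi.single (edge i j hij) 1) i j = mult p i j + 1 := by
  rw [mult, dif_pos hij, mult, dif_pos hij, Pi.add_apply, Pi.single_eq_same]

lemma mult_mul_weight_add_single {i j : Fin m} (hij : i ≠ j) (p : Edge m → ℕ) :
    (mult (p + Pi.single (edge i j hij) 1) i j : ℚ) * weight (p + Pi.single (edge i j hij) 1) =
      (wvec p i + 1) * (wvec p j + 1) * weight p := by
  have hdeg : ∏ t, (wvec (p + Pi.single (edge i j hij) 1) t)! =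
      (wvec p j + 1) * ((wvec p i + 1) * ∏ t, (wvec p t)!) := by
    rw [wvec_add, wvec_single_edge, ← add_assoc, prod_factorial_add_single,
      prod_factorial_add_single, Pi.add_apply, Pi.single_eq_of_ne hij.symm, add_zero]
  have hmult : mult p i j = p (edge i j hij) := dif_pos hij
  simp only [weight, mult_add_single_edge, ← Nat.cast_prod, hdeg, prod_factorial_add_single, hmult]
  have hfact : ((∏ e, (p e)! : ℕ) : ℚ) ≠ 0 := by
    exact_mod_cast prod_ne_zero_iff.2 fun e _ ↦ (p e).factorial_ne_zero
  push_cast at hfact ⊢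
  field_simp

lemma sub_single_edge_add_cancel {p : Edge m → ℕ} {i j : Fin m} (hij : i ≠ j)
    (hp : mult p i j ≠ 0) :
    p - Pi.single (edge i j hij) 1 + Pi.single (edge i j hij) 1 = p := by
  rw [mult, dif_pos hij] at hp
  refine tsub_add_cancel_of_le fun e ↦ ?_
  obtain rfl | he := eq_or_ne e (edge i j hij)
  · rw [Pi.single_eq_same]
    exact Nat.one_le_iff_ne_zero.2 hp
  · rw [Pi.single_eq_of_ne he]
    exact Nat.zero_le _

lemma sum_mult_mul_weight {i j : Fin m} (hij : i ≠ j) (d : Fin m → ℕ) :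
    ∑ p ∈ multigraphs (d + Pi.single i 1 + Pi.single j 1), (mult p i j : ℚ) * weight p =
      (d i + 1) * (d j + 1) * ∑ p ∈ multigraphs d, weight p := by
  rw [mul_sum, ← sum_filter_of_ne (p := fun p ↦ mult p i j ≠ 0)
    fun p _ hp h ↦ hp (by rw [h, Nat.cast_zero, zero_mul])]
  symm
  refine sum_nbij' (· + Pi.single (edge i j hij) 1) (· - Pi.single (edge i j hij) 1) ?_ ?_ ?_ ?_ ?_
  · intro p hp
    rw [mem_multigraphs] at hp
    rw [mem_filter, mem_multigraphs, wvec_add, wvec_single_edge, hp, add_assoc,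
      mult_add_single_edge]
    exact ⟨rfl, Nat.succ_ne_zero _⟩
  · intro p hp
    obtain ⟨hp, hp0⟩ := mem_filter.1 hp
    rw [mem_multigraphs, ← sub_single_edge_add_cancel hij hp0, wvec_add, wvec_single_edge,
      add_assoc] at hp
    exact mem_multigraphs.2 (add_right_cancel hp)
  · exact fun p _ ↦ add_tsub_cancel_right _ _
  · exact fun p hp ↦ sub_single_edge_add_cancel hij (mem_filter.1 hp).2
  · intro p hp
    rw [mult_mul_weight_add_single, mem_multigraphs.1 hp]

end Multigraphs

section Swap

variable {α : Type*} [DecidableEq α] {σ : Equiv.Perm α} {x y : α}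

lemma swap_mul_apply_of_fixed (hx : σ x = x) (hy : σ y = y) (z : α) :
    (Equiv.swap x y * σ) z = if z = x then y else if z = y then x else σ z := by
  have hzx : σ z = x ↔ z = x := by rw [← hx, σ.apply_eq_iff_eq, hx]
  have hzy : σ z = y ↔ z = y := by rw [← hy, σ.apply_eq_iff_eq, hy]
  simp only [Equiv.Perm.mul_apply, Equiv.swap_apply_def, hzx, hzy]

lemma swap_mul_apply_eq_self_iff (hx : σ x = x) (hy : σ y = y) (hxy : x ≠ y) (z : α) :
    (Equiv.swap x y * σ) z = z ↔ σ z = z ∧ z ≠ x ∧ z ≠ y := by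
  rw [swap_mul_apply_of_fixed hx hy]
  grind

lemma swap_mul_involutive (hσ : ∀ z, σ (σ z) = z) (hx : σ x = x) (hy : σ y = y) (z : α) :
    (Equiv.swap x y * σ) ((Equiv.swap x y * σ) z) = z := by
  simp only [swap_mul_apply_of_fixed hx hy]
  grind

end Swap

section CrossingExtensions

variable {α : Type*} [Fintype α] [DecidableEq α] {m : ℕ}

/-- The perfect matchings extending the partial matching `σ` by chords that join points of
different colours. Matchings are encoded as involutions; the fixed points of `σ` are the points
which it leaves unmatched. -/
def crossingExtensions (c : α → Fin m) (σ : Equiv.Perm α) : Finset (Equiv.Perm α) :=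
  {f | (∀ x, f (f x) = x) ∧ ∀ x, if σ x = x then c (f x) ≠ c x else f x = σ x}

/-- The number of points of colour `i` left unmatched by the partial matching `σ`. -/
def freeCount (c : α → Fin m) (σ : Equiv.Perm α) (i : Fin m) : ℕ := #{x | σ x = x ∧ c x = i}

lemma mem_crossingExtensions {c : α → Fin m} {σ f : Equiv.Perm α} :
    f ∈ crossingExtensions c σ ↔
      (∀ x, f (f x) = x) ∧ ∀ x, if σ x = x then c (f x) ≠ c x else f x = σ x := by
  simp only [crossingExtensions, mem_filter_univ]

variable {σ : Equiv.Perm α}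

lemma freeCount_swap_mul (c : α → Fin m) {x y : α} (hx : σ x = x) (hy : σ y = y)
    (hxy : x ≠ y) :
    freeCount c (Equiv.swap x y * σ) + Pi.single (c x) 1 + Pi.single (c y) 1 = freeCount c σ := by
  have hsingle (z : α) (i : Fin m) :
      (Pi.single (c z) 1 : Fin m → ℕ) i = ∑ t, if t = z ∧ c t = i then 1 else 0 := by
    simp only [ite_and, sum_ite_eq', mem_univ, if_true, Pi.single_apply, eq_comm (a := i)]
  ext i
  simp only [Pi.add_apply, hsingle, freeCount, card_filter, ← sum_add_distrib,
    swap_mul_apply_eq_self_iff hx hy hxy]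
  exact sum_congr rfl fun z _ ↦ by grind

lemma mem_crossingExtensions_swap_mul {c : α → Fin m} {x y : α} (hx : σ x = x)
    (hy : σ y = y) (hc : c y ≠ c x) (f : Equiv.Perm α) :
    f ∈ crossingExtensions c (Equiv.swap x y * σ) ↔ f ∈ crossingExtensions c σ ∧ f x = y := by
  have hxy : x ≠ y := by rintro rfl; exact hc rfl
  simp only [mem_crossingExtensions, swap_mul_apply_of_fixed hx hy]
  constructor
  · rintro ⟨hf, hext⟩
    have hfx : f x = y := by simpa [hxy.symm] using hext x
    refine ⟨⟨hf, fun z ↦ ?_⟩, hfx⟩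
    have := hext z
    grind
  · rintro ⟨⟨hf, hext⟩, hfx⟩
    refine ⟨hf, fun z ↦ ?_⟩
    have := hext z
    grind

lemma partner_of_fixed {c : α → Fin m} {f : Equiv.Perm α} (hσ : ∀ z, σ (σ z) = z)
    (hf : f ∈ crossingExtensions c σ) {x : α} (hx : σ x = x) :
    σ (f x) = f x ∧ c (f x) ≠ c x := by
  obtain ⟨hinv, hext⟩ := mem_crossingExtensions.1 hf
  have hcx : c (f x) ≠ c x := by simpa only [hx, if_true] using hext x
  refine ⟨by_contra fun hfx ↦ hcx ?_, hcx⟩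
  have hback : x = σ (f x) := by simpa only [hfx, if_false, hinv] using hext (f x)
  rw [← hσ (f x), ← hback, hx]

lemma card_crossingExtensions_eq_sum (c : α → Fin m)
    (hσ : ∀ z, σ (σ z) = z) {x : α} (hx : σ x = x) :
    #(crossingExtensions c σ) =
      ∑ y with σ y = y ∧ c y ≠ c x, #(crossingExtensions c (Equiv.swap x y * σ)) := by
  rw [card_eq_sum_card_fiberwise (f := fun f ↦ f x) (t := {y | σ y = y ∧ c y ≠ c x})
    fun f hf ↦ by simpa using partner_of_fixed hσ hf hx]
  refine sum_congr rfl fun y hy ↦ congrArg card (ext fun f ↦ ?_)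
  obtain ⟨hy, hc⟩ := (mem_filter_univ _).1 hy
  rw [mem_filter, mem_crossingExtensions_swap_mul hx hy hc]

lemma card_crossingExtensions_of_forall_ne (c : α → Fin m)
    (hσ : ∀ z, σ (σ z) = z) (hfree : ∀ z, σ z ≠ z) : #(crossingExtensions c σ) = 1 := by
  refine card_eq_one.2 ⟨σ, ext fun f ↦ ?_⟩
  simp only [mem_crossingExtensions, hfree, if_false, mem_singleton]
  exact ⟨fun h ↦ Equiv.ext h.2, by rintro rfl; exact ⟨hσ, fun _ ↦ rfl⟩⟩

lemma sum_weight_multigraphs_zero : ∑ p ∈ multigraphs (0 : Fin m → ℕ), weight p = 1 := by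
  have hwvec : wvec (0 : Edge m → ℕ) = 0 := by ext; simp [wvec]
  have hzero : multigraphs (0 : Fin m → ℕ) = {0} := by simp [multigraphs, filter_singleton, hwvec]
  simp [hzero, weight, hwvec]

lemma mul_sum_weight (d : Fin m → ℕ) (i : Fin m) :
    (d i : ℚ) * ∑ p ∈ multigraphs d, weight p =
      ∑ j, ∑ p ∈ multigraphs d, (mult p i j : ℚ) * weight p := by
  rw [sum_comm, mul_sum]
  refine sum_congr rfl fun p hp ↦ ?_
  rw [← sum_mul, ← Nat.cast_sum, sum_mult, mem_multigraphs.1 hp]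

lemma freeCount_mul_sum_mult_div (c : α → Fin m) (i j : Fin m) :
    (freeCount c σ j : ℚ) * ((∑ p ∈ multigraphs (freeCount c σ), (mult p i j : ℚ) * weight p) /
      freeCount c σ j) = ∑ p ∈ multigraphs (freeCount c σ), (mult p i j : ℚ) * weight p := by
  refine mul_div_cancel_of_imp' fun hj ↦ sum_eq_zero fun p hp ↦ ?_
  have hle := mult_le_wvec p i j
  rw [mem_multigraphs.1 hp, Nat.cast_eq_zero.1 hj, Nat.le_zero] at hle
  rw [hle, Nat.cast_zero, zero_mul]

lemma sum_mult_mul_weight_freeCount {c : α → Fin m} {x y : α} (hx : σ x = x) (hy : σ y = y)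
    (hc : c y ≠ c x) :
    ∑ p ∈ multigraphs (freeCount c σ), (mult p (c x) (c y) : ℚ) * weight p =
      freeCount c σ (c x) * freeCount c σ (c y) *
        ∑ p ∈ multigraphs (freeCount c (Equiv.swap x y * σ)), weight p := by
  have hxy : x ≠ y := by rintro rfl; exact hc rfl
  rw [← freeCount_swap_mul c hx hy hxy, sum_mult_mul_weight hc.symm]
  simp [hc, hc.symm]

lemma sum_div_freeCount (c : α → Fin m) (i : Fin m) :
    ∑ y with σ y = y ∧ c y ≠ i,
        (∑ p ∈ multigraphs (freeCount c σ), (mult p i (c y) : ℚ) * weight p) / freeCount c σ (c y) =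
      ∑ j, ∑ p ∈ multigraphs (freeCount c σ), (mult p i j : ℚ) * weight p := by
  rw [← sum_fiberwise _ c]
  refine sum_congr rfl fun j _ ↦ ?_
  obtain rfl | hj := eq_or_ne j i
  · have hmult (p : Edge m → ℕ) : mult p j j = 0 := dif_neg (not_not.2 rfl)
    rw [filter_filter, filter_false_of_mem fun y _ h ↦ h.1.2 h.2, sum_empty]
    simp only [hmult, Nat.cast_zero, zero_mul, sum_const_zero]
  · rw [filter_filter, filter_congr (q := fun y ↦ σ y = y ∧ c y = j) fun y _ ↦ by grind]
    calc
      _ = ∑ y with σ y = y ∧ c y = j, (∑ p ∈ multigraphs (freeCount c σ),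
            (mult p i j : ℚ) * weight p) / freeCount c σ j :=
        sum_congr rfl fun y hy ↦ by rw [((mem_filter_univ _).1 hy).2]
      _ = ∑ p ∈ multigraphs (freeCount c σ), (mult p i j : ℚ) * weight p := by
        rw [sum_const, nsmul_eq_mul]
        exact freeCount_mul_sum_mult_div c i j

/-- The matchings are counted by the partner of a free point `x`; the terms of the resulting sum
depend only on the colour of the partner. -/
theorem card_crossingExtensions (c : α → Fin m) (hσ : ∀ z, σ (σ z) = z) :
    (#(crossingExtensions c σ) : ℚ) = ∑ p ∈ multigraphs (freeCount c σ), weight p := by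
  induction hN : #{z | σ z = z} using Nat.strong_induction_on generalizing σ with
  | _ N ih =>
  by_cases! hfree : ∀ z, σ z ≠ z
  · have hzero : freeCount c σ = 0 := by ext i; simp [freeCount, hfree]
    rw [card_crossingExtensions_of_forall_ne c hσ hfree, hzero, sum_weight_multigraphs_zero,
      Nat.cast_one]
  obtain ⟨x, hx⟩ := hfree
  have hpos {z : α} (hz : σ z = z) : (freeCount c σ (c z) : ℚ) ≠ 0 :=
    Nat.cast_ne_zero.2 (card_pos.2 ⟨z, by simp [hz]⟩).ne'
  let S (j : Fin m) : ℚ := ∑ p ∈ multigraphs (freeCount c σ), (mult p (c x) j : ℚ) * weight p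
  have hbranch : ∀ y ∈ ({y | σ y = y ∧ c y ≠ c x} : Finset α),
      (freeCount c σ (c x) : ℚ) * #(crossingExtensions c (Equiv.swap x y * σ)) =
        S (c y) / freeCount c σ (c y) := by
    intro y hy
    obtain ⟨hy, hc⟩ := (mem_filter_univ _).1 hy
    have hxy : x ≠ y := by rintro rfl; exact hc rfl
    have hlt : #{z | (Equiv.swap x y * σ) z = z} < N := by
      rw [← hN]
      refine card_lt_card (ssubset_iff_of_subset (fun z ↦ ?_) |>.2 ⟨x, ?_⟩) <;>
        simp +contextual [swap_mul_apply_eq_self_iff hx hy hxy, hx, -Equiv.Perm.coe_mul]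
    rw [ih _ hlt (swap_mul_involutive hσ hx hy) rfl, eq_div_iff (hpos hy),
      show S (c y) = _ from sum_mult_mul_weight_freeCount hx hy hc]
    ring
  refine mul_left_cancel₀ (hpos hx) ?_
  rw [mul_sum_weight, card_crossingExtensions_eq_sum c hσ hx, Nat.cast_sum, mul_sum,
    sum_congr rfl hbranch, sum_div_freeCount]

end CrossingExtensions

section Multichoose

open PowerSeries in
lemma mk_one_pow_eq_mk_multichoose {R : Type*} [CommRing R] (d : ℕ) :
    (mk 1 : R⟦X⟧) ^ d = mk fun n ↦ (d.multichoose n : R) := by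
  cases d with
  | zero => ext n; cases n <;> simp [coeff_one]
  | succ d =>
    rw [mk_one_pow_eq_mk_choose_add]
    ext n
    rw [coeff_mk, coeff_mk, Nat.multichoose_eq, Nat.add_right_comm, Nat.add_sub_cancel,
      Nat.choose_symm_add]

lemma sum_finsuppAntidiag_eq_sum_piAntidiag {ι M : Type*} [Fintype ι] [DecidableEq ι]
    [AddCommMonoid M] (q : ℕ) (g : (ι → ℕ) → M) :
    ∑ r ∈ finsuppAntidiag univ q, g r = ∑ r ∈ piAntidiag univ q, g r := by
  refine sum_equiv Finsupp.equivFunOnFinite (fun r ↦ ?_) fun _ _ ↦ rfl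
  simp [mem_finsuppAntidiag]

open PowerSeries in
/-- The Chu–Vandermonde convolution, read off from `∏ᵢ (1 - X)⁻ᵃⁱ = (1 - X)^(-∑ᵢ aᵢ)`. -/
lemma sum_prod_multichoose {ι : Type*} [Fintype ι] [DecidableEq ι] (a : ι → ℕ) (q : ℕ) :
    ∑ r ∈ piAntidiag univ q, ∏ i, (a i).multichoose (r i) = (∑ i, a i).multichoose q := by
  have hcoeff := congrArg (coeff q)
    (prod_pow_eq_pow_sum (s := univ) (f := a) (a := (mk 1 : ℤ⟦X⟧)))
  simp only [coeff_prod, mk_one_pow_eq_mk_multichoose, coeff_mk] at hcoeff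
  rw [sum_finsuppAntidiag_eq_sum_piAntidiag q fun r ↦ ∏ i, ((a i).multichoose (r i) : ℤ)] at hcoeff
  exact_mod_cast hcoeff

lemma multichoose_succ_mul_factorial_mul_factorial (w r : ℕ) :
    (w + 1).multichoose r * w ! * r ! = (w + r)! := by
  rw [Nat.multichoose_eq, Nat.add_right_comm, Nat.add_sub_cancel,
    Nat.add_choose_mul_factorial_mul_factorial]

end Multichoose

section VertexRemoval

variable {k : ℕ} (v : Fin (k + 1))

/-- The edges of `K_{k+1}`, as the edges of `K_k` and the edges at the vertex `v`, where the
vertices of `K_k` are those of `K_{k+1}` other than `v`. -/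
def edgeOfSum : Edge k ⊕ Fin k → Edge (k + 1)
  | .inl e => ⟨e.val.map v.succAbove, by
      rw [Sym2.isDiag_map Fin.succAbove_right_injective]; exact e.2⟩
  | .inr i => edge v (v.succAbove i) (Fin.ne_succAbove v i)

lemma notMem_edgeOfSum_inl (e : Edge k) : v ∉ (edgeOfSum v (.inl e)).val := by
  intro hv
  obtain ⟨a, -, ha⟩ := Sym2.mem_map.1 hv
  exact Fin.succAbove_ne v a ha

lemma mem_edgeOfSum_inr (i : Fin k) : v ∈ (edgeOfSum v (.inr i)).val := Sym2.mem_mk_left _ _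

lemma succAbove_mem_edgeOfSum_inl {t : Fin k} {e : Edge k} :
    v.succAbove t ∈ (edgeOfSum v (.inl e)).val ↔ t ∈ e.val := by
  simp only [edgeOfSum, Sym2.mem_map, Fin.succAbove_right_inj, exists_eq_right]

lemma succAbove_mem_edgeOfSum_inr {t i : Fin k} :
    v.succAbove t ∈ (edgeOfSum v (.inr i)).val ↔ t = i := by
  simp only [edgeOfSum, edge, Sym2.mem_iff, Fin.succAbove_ne, false_or, Fin.succAbove_right_inj]

lemma edgeOfSum_injective : Function.Injective (edgeOfSum v) := by
  rintro (e | i) (e' | i') h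
  · exact congrArg _ (Subtype.ext
      (Sym2.map.injective Fin.succAbove_right_injective (congrArg Subtype.val h)))
  · exact absurd (h ▸ mem_edgeOfSum_inr v i') (notMem_edgeOfSum_inl v e)
  · exact absurd (h ▸ mem_edgeOfSum_inr v i) (notMem_edgeOfSum_inl v e')
  · have hi : v.succAbove i ∈ (edgeOfSum v (.inr i')).val :=
      h ▸ (succAbove_mem_edgeOfSum_inr v).2 rfl
    rw [(succAbove_mem_edgeOfSum_inr v).1 hi]

lemma edgeOfSum_surjective : Function.Surjective (edgeOfSum v) := by
  rintro ⟨⟨a, b⟩, hab⟩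
  have hab : a ≠ b := by simpa using hab
  obtain rfl | ⟨a, rfl⟩ := Fin.eq_self_or_eq_succAbove v a
  · obtain ⟨b, rfl⟩ := Fin.exists_succAbove_eq hab.symm
    exact ⟨.inr b, rfl⟩
  · obtain rfl | ⟨b, rfl⟩ := Fin.eq_self_or_eq_succAbove v b
    · exact ⟨.inr a, Subtype.ext Sym2.eq_swap⟩
    · exact ⟨.inl (edge a b fun h ↦ hab (congrArg _ h)), rfl⟩

/-- The equivalence between multigraphs on `K_{k+1}` and pairs `(p, r)`, where `p` is a multigraph
on the vertices other than `v` and `r` gives the multiplicities of the edges at `v`. -/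
noncomputable def addVertex : (Edge k → ℕ) × (Fin k → ℕ) ≃ (Edge (k + 1) → ℕ) :=
  (Equiv.sumArrowEquivProdArrow _ _ _).symm.trans
    ((Equiv.ofBijective _ ⟨edgeOfSum_injective v, edgeOfSum_surjective v⟩).arrowCongr (.refl ℕ))

lemma addVertex_edgeOfSum (p : Edge k → ℕ) (r : Fin k → ℕ) (x : Edge k ⊕ Fin k) :
    addVertex v (p, r) (edgeOfSum v x) = Sum.elim p r x :=
  congrArg (Sum.elim p r) ((Equiv.ofBijective _ _).symm_apply_apply x)

@[to_additive]
lemma prod_edge_eq_mul {M : Type*} [CommMonoid M] (g : Edge (k + 1) → M) :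
    ∏ e, g e = (∏ e, g (edgeOfSum v (.inl e))) * ∏ i, g (edgeOfSum v (.inr i)) := by
  rw [← (Equiv.ofBijective _ ⟨edgeOfSum_injective v, edgeOfSum_surjective v⟩).prod_comp,
    Fintype.prod_sum_type]
  rfl

lemma sum_addVertex (p : Edge k → ℕ) (r : Fin k → ℕ) :
    ∑ e, addVertex v (p, r) e = ∑ e, p e + ∑ i, r i := by
  simp only [sum_edge_eq_add v, addVertex_edgeOfSum, Sum.elim_inl, Sum.elim_inr]

lemma wvec_addVertex_self (p : Edge k → ℕ) (r : Fin k → ℕ) :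
    wvec (addVertex v (p, r)) v = ∑ i, r i := by
  simp only [wvec, sum_edge_eq_add v, addVertex_edgeOfSum, Sum.elim_inl, Sum.elim_inr,
    notMem_edgeOfSum_inl, mem_edgeOfSum_inr, if_false, if_true, sum_const_zero, zero_add]

lemma wvec_addVertex_succAbove (p : Edge k → ℕ) (r : Fin k → ℕ) (t : Fin k) :
    wvec (addVertex v (p, r)) (v.succAbove t) = wvec p t + r t := by
  simp only [wvec, sum_edge_eq_add v, addVertex_edgeOfSum, Sum.elim_inl, Sum.elim_inr,
    succAbove_mem_edgeOfSum_inl, succAbove_mem_edgeOfSum_inr, sum_ite_eq, mem_univ, if_true]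

lemma weight_addVertex (p : Edge k → ℕ) (r : Fin k → ℕ) :
    weight (addVertex v (p, r)) =
      (∑ i, r i)! * (∏ i, ((wvec p i + 1).multichoose (r i) : ℚ)) * weight p := by
  have hr : ∏ i, ((r i)! : ℚ) ≠ 0 :=
    prod_ne_zero_iff.2 fun i _ ↦ Nat.cast_ne_zero.2 (r i).factorial_ne_zero
  simp only [weight, Fin.prod_univ_succAbove _ v, prod_edge_eq_mul v, wvec_addVertex_self,
    wvec_addVertex_succAbove, addVertex_edgeOfSum, Sum.elim_inl, Sum.elim_inr,
    ← multichoose_succ_mul_factorial_mul_factorial, Nat.cast_mul, prod_mul_distrib]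
  field_simp

theorem sum_weight_filter_wvec_eq (M q : ℕ) :
    ∑ P ∈ piAntidiag univ (M + q) with wvec P v = q, weight P =
      q ! * (2 * M + k).multichoose q * ∑ p ∈ piAntidiag univ M, weight (m := k) p := by
  calc
    _ = ∑ x ∈ (piAntidiag univ M : Finset (Edge k → ℕ)) ×ˢ piAntidiag univ q,
          weight (addVertex v x) := by
      refine (sum_equiv (addVertex v) (fun ⟨p, r⟩ ↦ ?_) fun _ _ ↦ rfl).symm
      simp only [mem_product, mem_filter, mem_piAntidiag, sum_addVertex, wvec_addVertex_self,
        mem_univ, implies_true, and_true]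
      exact and_congr_left fun hr ↦ by rw [← hr, add_left_inj]
    _ = ∑ p ∈ piAntidiag univ M, ∑ r ∈ piAntidiag univ q,
          q ! * (∏ i, ((wvec p i + 1).multichoose (r i) : ℚ)) * weight p := by
      rw [sum_product]
      refine sum_congr rfl fun p _ ↦ sum_congr rfl fun r hr ↦ ?_
      rw [weight_addVertex, (mem_piAntidiag.1 hr).1]
    _ = ∑ p ∈ piAntidiag univ M, q ! * (2 * M + k).multichoose q * weight p := by
      refine sum_congr rfl fun p hp ↦ ?_
      have hdeg : ∑ i, (wvec p i + 1) = 2 * M + k := by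
        rw [sum_add_distrib, sum_wvec, (mem_piAntidiag.1 hp).1]
        simp
      rw [← sum_mul, ← mul_sum, ← hdeg, ← sum_prod_multichoose]
      push_cast
      rfl
    _ = _ := (mul_sum _ _ _).symm

end VertexRemoval

section Layout

variable {k : ℕ}

/-- The position where bubble `i` starts in a diagram with `k` short chords whose bubbles, from left
to right, have sizes `s`: each earlier bubble is followed by a short chord. -/
def bubbleStart (s : Fin (k + 1) → ℕ) (i : Fin (k + 1)) : ℕ := ∑ t ∈ Iio i, (s t + 2)

/-- The position after the last vertex of bubble `i`; for `i ≠ k` a short chord starts there. -/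
def bubbleEnd (s : Fin (k + 1) → ℕ) (i : Fin (k + 1)) : ℕ := bubbleStart s i + s i

variable (s : Fin (k + 1) → ℕ)

lemma bubbleStart_le_bubbleEnd (i : Fin (k + 1)) : bubbleStart s i ≤ bubbleEnd s i :=
  Nat.le_add_right _ _

lemma bubbleEnd_add_two (i : Fin (k + 1)) : bubbleEnd s i + 2 = ∑ t ∈ Iic i, (s t + 2) := by
  rw [← Iio_insert, sum_insert notMem_Iio_self, bubbleEnd, bubbleStart]
  ring

lemma bubbleStart_zero : bubbleStart s 0 = 0 := sum_eq_zero fun t ht ↦ by simp at ht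

lemma bubbleStart_succ (i : Fin k) : bubbleStart s i.succ = bubbleEnd s i.castSucc + 2 := by
  rw [bubbleEnd_add_two, bubbleStart]
  exact sum_congr (ext fun t ↦ by simp [Fin.lt_def, Fin.le_def]) fun _ _ ↦ rfl

lemma bubbleEnd_zero : bubbleEnd s 0 = s 0 := by rw [bubbleEnd, bubbleStart_zero, zero_add]

lemma bubbleEnd_succ (i : Fin k) :
    bubbleEnd s i.succ = bubbleEnd s i.castSucc + 2 + s i.succ := by
  rw [bubbleEnd, bubbleStart_succ]

lemma bubbleEnd_last_eq_sum : bubbleEnd s (Fin.last k) = ∑ i, s i + 2 * k := by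
  have hsum := bubbleEnd_add_two s (Fin.last k)
  have huniv : Iic (Fin.last k) = univ := eq_univ_of_forall fun i ↦ mem_Iic.2 i.le_last
  simp only [huniv, sum_add_distrib, sum_const, card_univ, Fintype.card_fin, smul_eq_mul] at hsum
  omega

variable {s}

lemma bubbleEnd_add_two_le_bubbleStart {i j : Fin (k + 1)} (hij : i < j) :
    bubbleEnd s i + 2 ≤ bubbleStart s j := by
  rw [bubbleEnd_add_two]
  exact sum_le_sum_of_subset fun t ht ↦ mem_Iio.2 ((mem_Iic.1 ht).trans_lt hij)

lemma bubbleStart_strictMono : StrictMono (bubbleStart s) := fun i j hij ↦ by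
  have := bubbleEnd_add_two_le_bubbleStart (s := s) hij
  have := bubbleStart_le_bubbleEnd s i
  omega

lemma bubbleEnd_strictMono : StrictMono (bubbleEnd s) := fun i j hij ↦ by
  have := bubbleEnd_add_two_le_bubbleStart (s := s) hij
  have := bubbleStart_le_bubbleEnd s j
  omega

lemma bubbleEnd_injective : Function.Injective (bubbleEnd : (Fin (k + 1) → ℕ) → _) := by
  intro s s' h
  ext i
  have hi := congrFun h i
  cases i using Fin.cases with
  | zero => simpa only [bubbleEnd_zero] using hi
  | succ i => simpa only [bubbleEnd_succ, congrFun h i.castSucc, add_right_inj] using hi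

lemma exists_bubbleEnd_eq {e : Fin (k + 1) → ℕ} (he : ∀ i j, i < j → e i + 2 ≤ e j) :
    ∃ s, bubbleEnd s = e := by
  refine ⟨fun i ↦ e i - Fin.cases 0 (fun t ↦ e t.castSucc + 2) i, funext fun i ↦ ?_⟩
  induction i using Fin.induction with
  | zero => exact bubbleEnd_zero _
  | succ i ih =>
    rw [bubbleEnd_succ, ih]
    exact Nat.add_sub_cancel' (he _ _ i.castSucc_lt_succ)

/-- The index of the bubble containing the position `x`, or preceding the short chord at `x`. -/
def block (s : Fin (k + 1) → ℕ) (x : ℕ) : Fin (k + 1) :=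
  ({i | bubbleStart s i ≤ x} : Finset (Fin (k + 1))).max' ⟨0, by simp [bubbleStart_zero]⟩

lemma bubbleStart_block_le (s : Fin (k + 1) → ℕ) (x : ℕ) : bubbleStart s (block s x) ≤ x :=
  (mem_filter_univ (p := (bubbleStart s · ≤ x)) _).1 (max'_mem _ _)

lemma le_block {x : ℕ} {i : Fin (k + 1)} (hi : bubbleStart s i ≤ x) : i ≤ block s x :=
  le_max' _ _ ((mem_filter_univ (p := (bubbleStart s · ≤ x)) _).2 hi)

lemma lt_bubbleEnd_block_add_two {x : ℕ} (hx : x < bubbleEnd s (Fin.last k) + 2) :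
    x < bubbleEnd s (block s x) + 2 := by
  obtain ⟨i, hi⟩ | hlast := (block s x).eq_castSucc_or_eq_last
  · by_contra! hge
    rw [hi, ← bubbleStart_succ] at hge
    have := le_block hge
    rw [hi] at this
    exact this.not_gt i.castSucc_lt_succ
  · rwa [hlast]

lemma block_eq_of_mem {x : ℕ} {i : Fin (k + 1)} (hi : bubbleStart s i ≤ x)
    (hx : x < bubbleEnd s i + 2) : block s x = i := by
  refine (le_block hi).antisymm' (not_lt.1 fun hlt ↦ ?_)
  have := bubbleEnd_add_two_le_bubbleStart (s := s) hlt
  have := bubbleStart_block_le s x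
  omega

lemma block_bubbleEnd (i : Fin (k + 1)) : block s (bubbleEnd s i) = i :=
  block_eq_of_mem (bubbleStart_le_bubbleEnd s i) (by omega)

lemma block_bubbleEnd_add_one (i : Fin (k + 1)) : block s (bubbleEnd s i + 1) = i :=
  block_eq_of_mem ((bubbleStart_le_bubbleEnd s i).trans (Nat.le_succ _)) (by omega)

end Layout

section BubbleSizes

variable {n k : ℕ} {f : Equiv.Perm (Fin (2 * n))} {s : Fin (k + 1) → ℕ}

/-- The positions where bubbles of `f`, possibly empty, end: the left ends of short chords, and the
end of the diagram. -/
def bubbleEnds (f : Equiv.Perm (Fin (2 * n))) : Finset ℕ :=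
  insert (2 * n) (({x | (f x).val = x.val + 1} : Finset (Fin (2 * n))).map Fin.valEmbedding)

/-- `s i` is the size of the `i`-th bubble of `f`, from left to right, empty bubbles included. -/
def HasBubbleSizes (f : Equiv.Perm (Fin (2 * n))) (s : Fin (k + 1) → ℕ) : Prop :=
  univ.image (bubbleEnd s) = bubbleEnds f

lemma mem_bubbleEnds {b : ℕ} :
    b ∈ bubbleEnds f ↔ b = 2 * n ∨ ∃ x : Fin (2 * n), x.val = b ∧ (f x).val = x.val + 1 := by
  simp [bubbleEnds, and_comm]

lemma val_mem_bubbleEnds {x : Fin (2 * n)} :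
    x.val ∈ bubbleEnds f ↔ (f x).val = x.val + 1 := by
  simp [mem_bubbleEnds, x.isLt.ne, Fin.val_inj]

lemma le_of_mem_bubbleEnds {b : ℕ} (hb : b ∈ bubbleEnds f) : b ≤ 2 * n := by
  obtain rfl | ⟨x, rfl, -⟩ := mem_bubbleEnds.1 hb
  exacts [le_rfl, x.isLt.le]

lemma card_bubbleEnds (f : Equiv.Perm (Fin (2 * n))) : #(bubbleEnds f) = shortChords n f + 1 := by
  rw [bubbleEnds, card_insert_of_notMem (by simp [Fin.is_lt, ne_of_lt]), card_map,
    shortChords, Nat.card_eq_fintype_card, Fintype.card_subtype]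

lemma HasBubbleSizes.mem_bubbleEnds_iff (hs : HasBubbleSizes f s) {b : ℕ} :
    b ∈ bubbleEnds f ↔ ∃ i, bubbleEnd s i = b := by
  rw [← hs, mem_image_univ_iff_mem_range, Set.mem_range]

lemma HasBubbleSizes.bubbleEnd_last (hs : HasBubbleSizes f s) :
    bubbleEnd s (Fin.last k) = 2 * n := by
  obtain ⟨i, hi⟩ := hs.mem_bubbleEnds_iff.1 (mem_insert_self _ _)
  refine le_antisymm (le_of_mem_bubbleEnds (hs.mem_bubbleEnds_iff.2 ⟨_, rfl⟩)) ?_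
  rw [← hi]
  exact bubbleEnd_strictMono.monotone i.le_last

lemma hasBubbleSizes_iff :
    HasBubbleSizes f s ↔ bubbleEnd s (Fin.last k) = 2 * n ∧
      ∀ x : Fin (2 * n), (f x).val = x.val + 1 ↔ ∃ i, bubbleEnd s i = x.val := by
  refine ⟨fun hs ↦ ⟨hs.bubbleEnd_last, fun x ↦ ?_⟩, fun ⟨hlast, hs⟩ ↦ ext fun b ↦ ?_⟩
  · rw [← val_mem_bubbleEnds, hs.mem_bubbleEnds_iff]
  · rw [mem_image_univ_iff_mem_range, Set.mem_range]
    obtain hb | rfl | hb := lt_trichotomy b (2 * n)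
    · rw [← hs ⟨b, hb⟩]
      exact val_mem_bubbleEnds.symm
    · exact iff_of_true ⟨_, hlast⟩ (mem_insert_self _ _)
    · refine iff_of_false (fun ⟨i, hi⟩ ↦ ?_) fun hmem ↦ (le_of_mem_bubbleEnds hmem).not_gt hb
      have := bubbleEnd_strictMono.monotone (f := bubbleEnd s) i.le_last
      omega

lemma HasBubbleSizes.shortChords_eq (hs : HasBubbleSizes f s) : shortChords n f = k := by
  have hcard := card_bubbleEnds f
  rw [← hs, card_image_of_injective _ bubbleEnd_strictMono.injective, card_univ,
    Fintype.card_fin] at hcard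
  omega

lemma HasBubbleSizes.sum_eq (hs : HasBubbleSizes f s) : ∑ i, s i + 2 * k = 2 * n := by
  rw [← bubbleEnd_last_eq_sum, hs.bubbleEnd_last]

lemma HasBubbleSizes.unique {s' : Fin (k + 1) → ℕ} (hs : HasBubbleSizes f s)
    (hs' : HasBubbleSizes f s') : s = s' := by
  have hcard : #(bubbleEnds f) = k + 1 := by rw [card_bubbleEnds, hs.shortChords_eq]
  refine bubbleEnd_injective ?_
  rw [orderEmbOfFin_unique hcard (fun i ↦ hs.mem_bubbleEnds_iff.2 ⟨i, rfl⟩) bubbleEnd_strictMono,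
    orderEmbOfFin_unique hcard (fun i ↦ hs'.mem_bubbleEnds_iff.2 ⟨i, rfl⟩) bubbleEnd_strictMono]

lemma add_two_le_of_mem_bubbleEnds (hf : IsDiagram n f) {a b : ℕ} (ha : a ∈ bubbleEnds f)
    (hb : b ∈ bubbleEnds f) (hab : a < b) : a + 2 ≤ b := by
  obtain rfl | ⟨x, rfl, hx⟩ := mem_bubbleEnds.1 ha
  · exact absurd (le_of_mem_bubbleEnds hb) hab.not_ge
  · have hfx : (f x).val ∉ bubbleEnds f := by
      rw [val_mem_bubbleEnds, hf.1]
      omega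
    have hne : b ≠ (f x).val := fun h ↦ hfx (h ▸ hb)
    omega

lemma IsDiagram.exists_hasBubbleSizes (hf : IsDiagram n f) (hk : shortChords n f = k) :
    ∃ s : Fin (k + 1) → ℕ, HasBubbleSizes f s := by
  have hcard : #(bubbleEnds f) = k + 1 := by rw [card_bubbleEnds, hk]
  let e := (bubbleEnds f).orderEmbOfFin hcard
  obtain ⟨s, hs⟩ := exists_bubbleEnd_eq (e := e) fun i j hij ↦
    add_two_le_of_mem_bubbleEnds hf (orderEmbOfFin_mem _ _ i) (orderEmbOfFin_mem _ _ j)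
      (e.strictMono hij)
  exact ⟨s, by rw [HasBubbleSizes, hs, image_orderEmbOfFin_univ]⟩

end BubbleSizes

section Diagrams

variable {n k : ℕ} {f : Equiv.Perm (Fin (2 * n))} {s : Fin (k + 1) → ℕ}

lemma IsDiagram.shortEnd_apply_iff (hf : IsDiagram n f) (x : Fin (2 * n)) :
    ShortEnd n f (f x) ↔ ShortEnd n f x := by
  simp only [ShortEnd, hf.1]
  omega

lemma bubbleEnd_add_two_le (hlast : bubbleEnd s (Fin.last k) = 2 * n) {i : Fin (k + 1)}
    (hi : bubbleEnd s i < 2 * n) : bubbleEnd s i + 2 ≤ 2 * n := by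
  rw [← hlast, bubbleEnd_strictMono.lt_iff_lt] at hi
  have := bubbleEnd_add_two_le_bubbleStart (s := s) hi
  have := bubbleStart_le_bubbleEnd s (Fin.last k)
  omega

lemma bubbleEnd_add_two_eq_bubbleStart (hlast : bubbleEnd s (Fin.last k) = 2 * n)
    {i : Fin (k + 1)} (hi : bubbleEnd s i < 2 * n) : ∃ j, bubbleStart s j = bubbleEnd s i + 2 := by
  obtain ⟨i, rfl⟩ | rfl := i.eq_castSucc_or_eq_last
  · exact ⟨i.succ, bubbleStart_succ s i⟩
  · omega

lemma lt_bubbleEnd_block_add_two_of_last (hlast : bubbleEnd s (Fin.last k) = 2 * n)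
    (x : Fin (2 * n)) : x < bubbleEnd s (block s x) + 2 :=
  lt_bubbleEnd_block_add_two (by omega)

namespace HasBubbleSizes

lemma apply_eq_succ_iff (hs : HasBubbleSizes f s) (x : Fin (2 * n)) :
    (f x).val = x.val + 1 ↔ ∃ i, bubbleEnd s i = x.val := (hasBubbleSizes_iff.1 hs).2 x

lemma apply_succ_eq_iff (hs : HasBubbleSizes f s) (hf : IsDiagram n f) (x : Fin (2 * n)) :
    (f x).val + 1 = x.val ↔ ∃ i, bubbleEnd s i + 1 = x.val := by
  constructor
  · intro hx
    obtain ⟨i, hi⟩ := (hs.apply_eq_succ_iff (f x)).1 (by rw [hf.1, hx])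
    exact ⟨i, by rw [hi, hx]⟩
  · rintro ⟨i, hi⟩
    have hfx : f ⟨bubbleEnd s i, by omega⟩ = x :=
      Fin.ext (((hs.apply_eq_succ_iff _).2 ⟨i, rfl⟩).trans hi)
    rw [← hfx, hf.1, hfx, hi]

lemma shortEnd_iff (hs : HasBubbleSizes f s) (hf : IsDiagram n f) (x : Fin (2 * n)) :
    ShortEnd n f x ↔ bubbleEnd s (block s x) ≤ x := by
  rw [ShortEnd, hs.apply_eq_succ_iff, hs.apply_succ_eq_iff hf]
  constructor
  · rintro (⟨i, hi⟩ | ⟨i, hi⟩) <;> rw [← hi]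
    · rw [block_bubbleEnd]
    · rw [block_bubbleEnd_add_one]
      exact Nat.le_succ _
  · intro hx
    have := lt_bubbleEnd_block_add_two_of_last hs.bubbleEnd_last x
    obtain h | h : bubbleEnd s (block s x) = x ∨ bubbleEnd s (block s x) + 1 = x := by omega
    exacts [.inl ⟨_, h⟩, .inr ⟨_, h⟩]

lemma leftDelimiter_iff (hs : HasBubbleSizes f s) (hf : IsDiagram n f) (a : ℕ) :
    (a = 0 ∨ ∃ j : Fin (2 * n), j.val + 1 = a ∧ (f j).val + 1 = j.val) ↔
      ∃ i, bubbleStart s i = a := by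
  simp only [hs.apply_succ_eq_iff hf]
  constructor
  · rintro (rfl | ⟨j, rfl, i, hi⟩)
    · exact ⟨0, bubbleStart_zero s⟩
    · rw [← hi]
      exact bubbleEnd_add_two_eq_bubbleStart hs.bubbleEnd_last (by omega)
  · rintro ⟨i, rfl⟩
    cases i using Fin.cases with
    | zero => exact .inl (bubbleStart_zero s)
    | succ i =>
      have := bubbleEnd_add_two_le_bubbleStart (s := s) i.castSucc_lt_succ
      have hlt : bubbleEnd s i.castSucc < bubbleEnd s (Fin.last k) :=
        bubbleEnd_strictMono i.castSucc_lt_last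
      have hle := bubbleEnd_add_two_le hs.bubbleEnd_last (hs.bubbleEnd_last ▸ hlt)
      exact .inr ⟨⟨bubbleEnd s i.castSucc + 1, by omega⟩, (bubbleStart_succ s i).symm, _, rfl⟩

lemma bubbleEnd_le (hs : HasBubbleSizes f s) (i : Fin (k + 1)) : bubbleEnd s i ≤ 2 * n :=
  le_of_mem_bubbleEnds (hs.mem_bubbleEnds_iff.2 ⟨i, rfl⟩)

lemma isGap_iff (hs : HasBubbleSizes f s) (hf : IsDiagram n f) (a : ℕ) :
    IsGap n f a ↔ ∃ i, bubbleStart s i = a ∧ s i = 0 := by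
  rw [IsGap, hs.leftDelimiter_iff hf, ← mem_bubbleEnds, hs.mem_bubbleEnds_iff]
  constructor
  · rintro ⟨-, ⟨i, rfl⟩, j, hj⟩
    have hblock : block s (bubbleStart s i) = i :=
      block_eq_of_mem le_rfl (by rw [bubbleEnd]; omega)
    rw [← hj, block_bubbleEnd] at hblock
    subst hblock
    exact ⟨j, rfl, by rw [bubbleEnd] at hj; omega⟩
  · rintro ⟨i, rfl, hi⟩
    have hend : bubbleEnd s i = bubbleStart s i := by rw [bubbleEnd, hi, add_zero]
    exact ⟨hend ▸ hs.bubbleEnd_le i, ⟨i, rfl⟩, i, hend⟩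

lemma isBubble_of_bubbleEnd_eq (hs : HasBubbleSizes f s) (hf : IsDiagram n f) {i : Fin (k + 1)}
    {b : ℕ} (hb : bubbleEnd s i = b + 1) (hi : s i ≠ 0) : IsBubble n f (bubbleStart s i) b := by
  have hlt : bubbleStart s i < bubbleEnd s i := by rw [bubbleEnd]; omega
  have hle := hs.bubbleEnd_le i
  refine ⟨by omega, by omega, fun x hax hxb ↦ ?_, ?_, ?_⟩
  · rw [hs.shortEnd_iff hf, block_eq_of_mem hax (by omega)]
    omega
  · exact ((hs.leftDelimiter_iff hf _).2 ⟨i, rfl⟩).imp_right fun ⟨j, hja, hj⟩ ↦ ⟨j, hja, .inr hj⟩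
  · exact (mem_bubbleEnds.1 (hs.mem_bubbleEnds_iff.2 ⟨i, hb⟩)).imp_right
      fun ⟨j, hjb, hj⟩ ↦ ⟨j, hjb, .inl hj⟩

lemma isBubble_iff (hs : HasBubbleSizes f s) (hf : IsDiagram n f) (a b : ℕ) :
    IsBubble n f a b ↔ ∃ i, bubbleStart s i = a ∧ bubbleEnd s i = b + 1 ∧ s i ≠ 0 := by
  refine ⟨fun ⟨hab, hb, hinner, hleft, hright⟩ ↦ ?_, ?_⟩
  · obtain ⟨i, hi⟩ : ∃ i, block s a = i := ⟨_, rfl⟩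
    have hia : bubbleStart s i ≤ a := hi ▸ bubbleStart_block_le s a
    have hai : a < bubbleEnd s i := by
      simpa only [hs.shortEnd_iff hf, hi, not_le] using hinner ⟨a, by omega⟩ le_rfl hab
    have hshort {x : Fin (2 * n)} (hx : ShortEnd n f x) (hix : bubbleStart s i ≤ x) :
        bubbleEnd s i ≤ x := by
      by_contra! hxi
      rw [hs.shortEnd_iff hf, block_eq_of_mem hix (by omega)] at hx
      omega
    have hbi : b < bubbleEnd s i := by
      by_contra! hle
      refine hinner ⟨bubbleEnd s i, by omega⟩ hai.le hle ((hs.shortEnd_iff hf _).2 ?_)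
      rw [block_bubbleEnd]
    have hstart : bubbleStart s i = a := by
      obtain rfl | ⟨j, rfl, hj⟩ := hleft
      · omega
      · by_contra hne
        have := hshort hj (by omega)
        omega
    have hend : bubbleEnd s i = b + 1 := by
      obtain hlast | ⟨j, hjb, hj⟩ := hright
      · have := hs.bubbleEnd_le i
        omega
      · have := hshort hj (by omega)
        omega
    exact ⟨i, hstart, hend, by rw [bubbleEnd] at hend; omega⟩
  · rintro ⟨i, rfl, hb, hi⟩
    exact hs.isBubble_of_bubbleEnd_eq hf hb hi

lemma crystallized_iff (hs : HasBubbleSizes f s) (hf : IsDiagram n f) :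
    Crystallized n f ↔
      ∀ x : Fin (2 * n), x < bubbleEnd s (block s x) → block s (f x) ≠ block s x := by
  constructor
  · intro hcryst x hx hblock
    have hstart := bubbleStart_block_le s x
    have hstart' : bubbleStart s (block s x) ≤ f x := hblock ▸ bubbleStart_block_le s (f x)
    have hfx : (f x).val < bubbleEnd s (block s x) := by
      rw [← not_le, ← hs.shortEnd_iff hf, ← hf.shortEnd_apply_iff, hs.shortEnd_iff hf, hblock,
        not_le] at hx
      exact hx
    have hbubble := (hs.isBubble_iff hf (bubbleStart s (block s x)) (bubbleEnd s (block s x) - 1)).2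
      ⟨_, rfl, by omega, by rw [bubbleEnd] at hx; omega⟩
    exact hcryst _ _ hbubble x hstart (by omega) ⟨hstart', by omega⟩
  · rintro hne a b hbubble x hax hxb ⟨hafx, hfxb⟩
    obtain ⟨i, rfl, hb, -⟩ := (hs.isBubble_iff hf a b).1 hbubble
    have hx : block s x = i := block_eq_of_mem hax (by omega)
    have hfx : block s (f x) = i := block_eq_of_mem hafx (by omega)
    exact hne x (by rw [hx]; omega) (hfx.trans hx.symm)

end HasBubbleSizes

end Diagrams

section ShortMatching

variable {n k : ℕ} {f : Equiv.Perm (Fin (2 * n))} {s : Fin (k + 1) → ℕ}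

/-- The other end of the short chord at the position `x`, or `x` itself if `x` lies in a bubble. -/
def shortPartner (s : Fin (k + 1) → ℕ) (x : ℕ) : ℕ :=
  if x = bubbleEnd s (block s x) then x + 1
  else if x = bubbleEnd s (block s x) + 1 then bubbleEnd s (block s x) else x

lemma shortPartner_bubbleEnd (i : Fin (k + 1)) :
    shortPartner s (bubbleEnd s i) = bubbleEnd s i + 1 := by
  rw [shortPartner, block_bubbleEnd, if_pos rfl]

lemma shortPartner_bubbleEnd_add_one (i : Fin (k + 1)) :
    shortPartner s (bubbleEnd s i + 1) = bubbleEnd s i := by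
  rw [shortPartner, block_bubbleEnd_add_one, if_neg (Nat.succ_ne_self _), if_pos rfl]

lemma shortPartner_of_lt {x : ℕ} (hx : x < bubbleEnd s (block s x)) : shortPartner s x = x := by
  rw [shortPartner, if_neg hx.ne, if_neg (by omega)]

lemma lt_bubbleEnd_or_exists_eq (hlast : bubbleEnd s (Fin.last k) = 2 * n) (x : Fin (2 * n)) :
    x < bubbleEnd s (block s x) ∨ (∃ i, bubbleEnd s i = x) ∨ ∃ i, bubbleEnd s i + 1 = x := by
  have hx := lt_bubbleEnd_block_add_two_of_last hlast x
  obtain h | h | h : x < bubbleEnd s (block s x) ∨ bubbleEnd s (block s x) = x ∨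
      bubbleEnd s (block s x) + 1 = x := by omega
  exacts [.inl h, .inr (.inl ⟨_, h⟩), .inr (.inr ⟨_, h⟩)]

lemma shortPartner_lt (hlast : bubbleEnd s (Fin.last k) = 2 * n) (x : Fin (2 * n)) :
    shortPartner s x < 2 * n := by
  obtain hx | ⟨i, hi⟩ | ⟨i, hi⟩ := lt_bubbleEnd_or_exists_eq hlast x
  · rw [shortPartner_of_lt hx]
    exact x.isLt
  · rw [← hi, shortPartner_bubbleEnd]
    exact bubbleEnd_add_two_le hlast (hi ▸ x.isLt)
  · rw [← hi, shortPartner_bubbleEnd_add_one]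
    omega

lemma shortPartner_shortPartner (hlast : bubbleEnd s (Fin.last k) = 2 * n) (x : Fin (2 * n)) :
    shortPartner s (shortPartner s x) = x := by
  obtain hx | ⟨i, hi⟩ | ⟨i, hi⟩ := lt_bubbleEnd_or_exists_eq hlast x
  · rw [shortPartner_of_lt hx, shortPartner_of_lt hx]
  · rw [← hi, shortPartner_bubbleEnd, shortPartner_bubbleEnd_add_one]
  · rw [← hi, shortPartner_bubbleEnd_add_one, shortPartner_bubbleEnd]

/-- The partial matching consisting of the short chords of the diagrams with bubble sizes `s`. -/
def shortMatching (hlast : bubbleEnd s (Fin.last k) = 2 * n) : Equiv.Perm (Fin (2 * n)) :=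
  Function.Involutive.toPerm (fun x ↦ ⟨shortPartner s x, shortPartner_lt hlast x⟩)
    fun x ↦ Fin.ext (shortPartner_shortPartner hlast x)

lemma val_shortMatching (hlast : bubbleEnd s (Fin.last k) = 2 * n) (x : Fin (2 * n)) :
    (shortMatching hlast x).val = shortPartner s x := rfl

lemma shortMatching_apply_eq_self_iff (hlast : bubbleEnd s (Fin.last k) = 2 * n)
    (x : Fin (2 * n)) : shortMatching hlast x = x ↔ x < bubbleEnd s (block s x) := by
  rw [Fin.ext_iff, val_shortMatching]
  refine ⟨fun hfix ↦ ?_, shortPartner_of_lt⟩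
  obtain hx | ⟨i, hi⟩ | ⟨i, hi⟩ := lt_bubbleEnd_or_exists_eq hlast x
  · exact hx
  · rw [← hi, shortPartner_bubbleEnd] at hfix
    omega
  · rw [← hi, shortPartner_bubbleEnd_add_one] at hfix
    omega

lemma freeCount_shortMatching (hlast : bubbleEnd s (Fin.last k) = 2 * n) :
    freeCount (fun x : Fin (2 * n) ↦ block s x) (shortMatching hlast) = s := by
  ext i
  have hmap : ({x | shortMatching hlast x = x ∧ block s x = i} : Finset (Fin (2 * n))).map
      Fin.valEmbedding = Ico (bubbleStart s i) (bubbleEnd s i) := by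
    ext y
    simp only [mem_map, mem_filter_univ, Fin.valEmbedding_apply, mem_Ico,
      shortMatching_apply_eq_self_iff]
    constructor
    · rintro ⟨x, ⟨hx, rfl⟩, rfl⟩
      exact ⟨bubbleStart_block_le s x, hx⟩
    · rintro ⟨hle, hlt⟩
      have hy : block s y = i := block_eq_of_mem hle (by omega)
      have hlast_le : bubbleEnd s i ≤ bubbleEnd s (Fin.last k) :=
        bubbleEnd_strictMono.monotone i.le_last
      exact ⟨⟨y, by omega⟩, ⟨hy.symm ▸ hlt, hy⟩, rfl⟩
  rw [freeCount, ← card_map, hmap, Nat.card_Ico, bubbleEnd, Nat.add_sub_cancel_left]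

lemma isDiagram_of_mem_crossingExtensions (hlast : bubbleEnd s (Fin.last k) = 2 * n)
    (hf : f ∈ crossingExtensions (fun x : Fin (2 * n) ↦ block s x) (shortMatching hlast)) :
    IsDiagram n f := by
  obtain ⟨hinv, hext⟩ := mem_crossingExtensions.1 hf
  refine ⟨hinv, fun x hfx ↦ ?_⟩
  have hx := hext x
  split_ifs at hx with hfix
  · exact hx (by rw [hfx])
  · exact hfix (hx.symm.trans hfx)

lemma hasBubbleSizes_of_mem_crossingExtensions (hlast : bubbleEnd s (Fin.last k) = 2 * n)
    (hf : f ∈ crossingExtensions (fun x : Fin (2 * n) ↦ block s x) (shortMatching hlast)) :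
    HasBubbleSizes f s := by
  refine hasBubbleSizes_iff.2 ⟨hlast, fun x ↦ ?_⟩
  have hx := (mem_crossingExtensions.1 hf).2 x
  simp only [shortMatching_apply_eq_self_iff] at hx
  split_ifs at hx with hfree
  · have hstart := bubbleStart_block_le s x
    refine iff_of_false (fun hfx ↦ hx ?_) fun ⟨i, hi⟩ ↦ ?_
    · rw [hfx]
      exact block_eq_of_mem (by omega) (by omega)
    · rw [← hi, block_bubbleEnd] at hfree
      exact hfree.false
  · rw [hx, val_shortMatching]
    obtain h | ⟨i, hi⟩ | ⟨i, hi⟩ := lt_bubbleEnd_or_exists_eq hlast x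
    · exact absurd h hfree
    · exact iff_of_true (by rw [← hi, shortPartner_bubbleEnd]) ⟨i, hi⟩
    · rw [← hi, shortPartner_bubbleEnd_add_one]
      refine iff_of_false (by omega) fun ⟨j, hj⟩ ↦ ?_
      have hij : j = i := by
        rw [← block_bubbleEnd (s := s) j, hj, block_bubbleEnd_add_one]
      rw [hij] at hj
      omega

lemma mem_crossingExtensions_shortMatching_iff (hlast : bubbleEnd s (Fin.last k) = 2 * n) :
    f ∈ crossingExtensions (fun x : Fin (2 * n) ↦ block s x) (shortMatching hlast) ↔
      IsDiagram n f ∧ Crystallized n f ∧ HasBubbleSizes f s := by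
  constructor
  · intro hmem
    have hf := isDiagram_of_mem_crossingExtensions hlast hmem
    have hs := hasBubbleSizes_of_mem_crossingExtensions hlast hmem
    refine ⟨hf, (hs.crystallized_iff hf).2 fun x hx ↦ ?_, hs⟩
    have hext := (mem_crossingExtensions.1 hmem).2 x
    rwa [if_pos ((shortMatching_apply_eq_self_iff hlast x).2 hx)] at hext
  · rintro ⟨hf, hcryst, hs⟩
    refine mem_crossingExtensions.2 ⟨hf.1, fun x ↦ ?_⟩
    simp only [shortMatching_apply_eq_self_iff]
    split_ifs with hfree
    · exact (hs.crystallized_iff hf).1 hcryst x hfree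
    · rw [Fin.ext_iff, val_shortMatching]
      obtain h | ⟨i, hi⟩ | ⟨i, hi⟩ := lt_bubbleEnd_or_exists_eq hlast x
      · exact absurd h hfree
      · rw [(hs.apply_eq_succ_iff x).2 ⟨i, hi⟩, ← hi, shortPartner_bubbleEnd]
      · rw [← hi, shortPartner_bubbleEnd_add_one]
        have := (hs.apply_succ_eq_iff hf x).2 ⟨i, hi⟩
        omega

open scoped Classical in
/-- The crystallized diagrams whose bubbles, from left to right, have sizes `s`. -/
noncomputable def crystallizedDiagrams (n : ℕ) (s : Fin (k + 1) → ℕ) :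
    Finset (Equiv.Perm (Fin (2 * n))) :=
  {f | IsDiagram n f ∧ Crystallized n f ∧ HasBubbleSizes f s}

lemma mem_crystallizedDiagrams :
    f ∈ crystallizedDiagrams n s ↔ IsDiagram n f ∧ Crystallized n f ∧ HasBubbleSizes f s := by
  simp only [crystallizedDiagrams, mem_filter_univ]

theorem card_crystallizedDiagrams (hs : ∑ i, s i + 2 * k = 2 * n) :
    (#(crystallizedDiagrams n s) : ℚ) = ∑ p ∈ multigraphs s, weight p := by
  have hlast : bubbleEnd s (Fin.last k) = 2 * n := (bubbleEnd_last_eq_sum s).trans hs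
  have heq : crystallizedDiagrams n s =
      crossingExtensions (fun x : Fin (2 * n) ↦ block s x) (shortMatching hlast) :=
    ext fun f ↦ mem_crystallizedDiagrams.trans (mem_crossingExtensions_shortMatching_iff hlast).symm
  rw [heq, card_crossingExtensions _ fun x ↦ Fin.ext (shortPartner_shortPartner hlast x),
    freeCount_shortMatching]

end ShortMatching

section Counting

variable {n k : ℕ}

/-- Both kinds of bubbles are determined by their starting position `a`: with `g a = a` this counts
the empty ones, and with `g a = (a, a + q - 1)` the nonempty ones. -/
lemma card_bubbles_eq_sum {β : Type*} (q : ℕ) (P : Equiv.Perm (Fin (2 * n)) → β → Prop) (g : ℕ → β)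
    (hg : Function.Injective g)
    (hP : ∀ f (s : Fin (k + 1) → ℕ), IsDiagram n f → HasBubbleSizes f s →
      ∀ y, P f y ↔ ∃ i, g (bubbleStart s i) = y ∧ s i = q) :
    Nat.card {p : Equiv.Perm (Fin (2 * n)) × β //
        IsDiagram n p.1 ∧ Crystallized n p.1 ∧ shortChords n p.1 = k ∧ P p.1 p.2} =
      ∑ i : Fin (k + 1), ∑ s ∈ piAntidiag univ (2 * n - 2 * k) with s i = q,
        #(crystallizedDiagrams n s) := by
  let T := (univ : Finset (Fin (k + 1))).sigma fun i ↦
    ({s ∈ piAntidiag univ (2 * n - 2 * k) | s i = q} : Finset (Fin (k + 1) → ℕ)).sigma fun s ↦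
      crystallizedDiagrams n s
  have hT {i s f} : ⟨i, s, f⟩ ∈ T ↔
      (∑ t, s t = 2 * n - 2 * k ∧ s i = q) ∧ IsDiagram n f ∧ Crystallized n f ∧
        HasBubbleSizes f s := by
    simp [T, mem_crystallizedDiagrams]
  simp only [← card_sigma]
  rw [← Nat.card_eq_finsetCard]
  symm
  refine Nat.card_eq_of_bijective (fun x : T ↦ ⟨(x.1.2.2, g (bubbleStart x.1.2.1 x.1.1)), ?_⟩)
    ⟨?_, ?_⟩
  · obtain ⟨⟨i, s, f⟩, hx⟩ := x
    obtain ⟨⟨-, hi⟩, hf, hcryst, hs⟩ := hT.1 hx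
    exact ⟨hf, hcryst, hs.shortChords_eq, (hP f s hf hs _).2 ⟨i, rfl, hi⟩⟩
  · rintro ⟨⟨i, s, f⟩, hx⟩ ⟨⟨i', s', f'⟩, hx'⟩ h
    simp only [Subtype.mk.injEq, Prod.mk.injEq] at h
    obtain ⟨rfl, hstart⟩ := h
    obtain rfl := (hT.1 hx).2.2.2.unique (hT.1 hx').2.2.2
    obtain rfl := bubbleStart_strictMono.injective (hg hstart)
    rfl
  · rintro ⟨⟨f, y⟩, hf, hcryst, hk, hy⟩
    obtain ⟨s, hs⟩ := hf.exists_hasBubbleSizes hk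
    obtain ⟨i, rfl, hi⟩ := (hP f s hf hs y).1 hy
    exact ⟨⟨⟨i, s, f⟩, hT.2 ⟨⟨Nat.eq_sub_of_add_eq hs.sum_eq, hi⟩, hf, hcryst, hs⟩⟩, rfl⟩

theorem C_eq_sum_card_crystallizedDiagrams (n k q : ℕ) :
    C n k q = ∑ i : Fin (k + 1), ∑ s ∈ piAntidiag univ (2 * n - 2 * k) with s i = q,
      #(crystallizedDiagrams n s) := by
  unfold C
  split_ifs with hq
  · exact card_bubbles_eq_sum q _ id Function.injective_id fun f s hf hs a ↦
      hq ▸ hs.isGap_iff hf a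
  · refine card_bubbles_eq_sum q
      (fun f (y : ℕ × ℕ) ↦ IsBubble n f y.1 y.2 ∧ bubbleSize y.1 y.2 = q)
      (fun a ↦ (a, a + q - 1)) (fun a b h ↦ (Prod.mk.inj h).1) ?_
    rintro f s hf hs ⟨a, b⟩
    simp only [hs.isBubble_iff hf, bubbleSize, bubbleEnd, Prod.mk.injEq]
    constructor
    · rintro ⟨⟨i, rfl, hend, -⟩, hsize⟩
      exact ⟨i, ⟨rfl, by omega⟩, by omega⟩
    · rintro ⟨i, ⟨rfl, hb⟩, hi⟩
      exact ⟨⟨i, rfl, by omega, by omega⟩, by omega⟩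

lemma sum_sum_multigraphs_eq {R : Type*} [AddCommMonoid R] {m : ℕ} (M : ℕ) (v : Fin m) (q : ℕ)
    (w : (Edge m → ℕ) → R) :
    ∑ s ∈ piAntidiag univ (2 * M) with s v = q, ∑ p ∈ multigraphs s, w p =
      ∑ p ∈ piAntidiag univ M with wvec p v = q, w p := by
  rw [← sum_fiberwise_of_maps_to (g := wvec)
    (t := {s ∈ piAntidiag univ (2 * M) | s v = q})]
  · refine sum_congr rfl fun s hs ↦ sum_congr (ext fun p ↦ ?_) fun _ _ ↦ rfl
    simp only [mem_filter, mem_piAntidiag, mem_univ, implies_true, and_true] at hs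
    simp only [mem_multigraphs, mem_filter, mem_piAntidiag, mem_univ, implies_true, and_true]
    refine ⟨?_, And.right⟩
    rintro rfl
    exact ⟨⟨Nat.eq_of_mul_eq_mul_left two_pos ((sum_wvec p).symm.trans hs.1), hs.2⟩, rfl⟩
  · intro p hp
    simp only [mem_filter, mem_piAntidiag, mem_univ, implies_true, and_true] at hp ⊢
    exact ⟨by rw [sum_wvec, hp.1], hp.2⟩

theorem C_eq_mul_sum_weight (M k q : ℕ) :
    (C (M + q + k) k q : ℚ) =
      (k + 1) * (q ! * (2 * M + k).multichoose q * ∑ p ∈ piAntidiag univ M, weight (m := k) p) := by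
  have hsize : 2 * (M + q + k) - 2 * k = 2 * (M + q) := by omega
  rw [C_eq_sum_card_crystallizedDiagrams, hsize, Nat.cast_sum]
  calc
    _ = ∑ _i : Fin (k + 1),
          (q ! * (2 * M + k).multichoose q * ∑ p ∈ piAntidiag univ M, weight (m := k) p : ℚ) := by
      refine sum_congr rfl fun i _ ↦ ?_
      rw [← sum_weight_filter_wvec_eq i, ← sum_sum_multigraphs_eq, Nat.cast_sum]
      refine sum_congr rfl fun s hs ↦ card_crystallizedDiagrams ?_
      rw [(mem_piAntidiag.1 (mem_filter.1 hs).1).1]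
      ring
    _ = _ := by simp

lemma filter_piFinset_range_eq_piAntidiag {ι : Type*} [Fintype ι] [DecidableEq ι] (M : ℕ) :
    {p ∈ Fintype.piFinset fun _ : ι ↦ range (M + 1) | ∑ i, p i = M} = piAntidiag univ M := by
  ext p
  simp only [mem_filter, Fintype.mem_piFinset, mem_range, Nat.lt_succ_iff, mem_piAntidiag,
    mem_univ, implies_true, and_true, and_iff_right_iff_imp]
  rintro rfl i
  exact single_le_sum (fun _ _ ↦ Nat.zero_le _) (mem_univ i)

end Counting

/-- The number `C n k q` of bubbles of size `q` amongst all crystallized diagrams with `n` chords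
and `k` short chords equals
`(k+1) · (2n-k-q-1)!/(2n-k-2q-1)! · Σ (∏ⱼ wⱼ!)/(∏ᵢ pᵢ!)`,
the sum running over assignments `p` of nonnegative integers to the edges of `K_k` with total
sum `n - k - q`, and `w = B p` with `B` the incidence matrix of `K_k`. -/
theorem C_eq_sum_multinomial (n k q : ℕ) (hn : 1 ≤ n) (hk : 1 ≤ k)
    (hkq : k + q ≤ n) (hkq2 : k + 2 * q + 1 ≤ 2 * n) :
    (C n k q : ℚ) =
      (k + 1 : ℚ) * (Nat.factorial (2 * n - k - q - 1) : ℚ) /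
        (Nat.factorial (2 * n - k - 2 * q - 1) : ℚ) *
      ∑ p ∈ (Fintype.piFinset fun _ : Edge k => Finset.range (n - k - q + 1)).filter
          (fun p => ∑ e, p e = n - k - q),
        (∏ j : Fin k, (Nat.factorial (wvec p j) : ℚ)) /
        (∏ e : Edge k, (Nat.factorial (p e) : ℚ)) := by
  obtain ⟨M, rfl⟩ : ∃ M, n = M + q + k := ⟨n - k - q, by omega⟩
  obtain ⟨l, rfl⟩ : ∃ l, k = l + 1 := ⟨k - 1, by omega⟩
  have hM : M + q + (l + 1) - (l + 1) - q = M := by omega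
  have hnum : 2 * (M + q + (l + 1)) - (l + 1) - q - 1 = 2 * M + l + q := by omega
  have hden : 2 * (M + q + (l + 1)) - (l + 1) - 2 * q - 1 = 2 * M + l := by omega
  have hfact : (((2 * M + l)! : ℕ) : ℚ) ≠ 0 := Nat.cast_ne_zero.2 (Nat.factorial_ne_zero _)
  rw [C_eq_mul_sum_weight, hM, hnum, hden, filter_piFinset_range_eq_piAntidiag,
    ← multichoose_succ_mul_factorial_mul_factorial, ← add_assoc, ← mul_assoc]
  refine congrArg₂ _ ?_ rfl
  rw [eq_div_iff hfact]
  push_cast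
  ring

end ChordBubbles
end

section
/- For every integer k ≥ 1, the E×E matrix M = (k−2)·I_E − L over ℚ is invertible, and the grand sum of its inverse satisfies j_Eᵀ·M⁻¹·j_E = −(k+1)/2, where j_E is the E×1 column vector all of whose entries are 1. -/
open Matrix Polynomial

namespace ChordBubbles

/-- The incidence matrix of the complete graph `K_{k+1}` over `ℚ`: rows indexed by vertices,
columns by edges, with entry 1 exactly when the vertex is an endpoint of the edge. -/
def Bmat (k : ℕ) : Matrix (Fin (k + 1)) (Edge (k + 1)) ℚ :=
  Matrix.of fun v e => if v ∈ e.val then 1 else 0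

/-- The adjacency matrix of the line graph of `K_{k+1}`: `L = Bᵀ·B - 2·I`. -/
def Lmat (k : ℕ) : Matrix (Edge (k + 1)) (Edge (k + 1)) ℚ :=
  (Bmat k)ᵀ * Bmat k - 2 • 1

/-- The matrix `M = (k-2)·I - L`. -/
noncomputable def Mmat (k : ℕ) : Matrix (Edge (k + 1)) (Edge (k + 1)) ℚ :=
  ((k : ℚ) - 2) • 1 - Lmat k

/-! Write `J = vecMulVec 1 1` for the all-ones matrix. Since `M = k·I - BᵀB` and
`BBᵀ = (k-1)·I + J`, the Weinstein–Aronszajn identity equates the determinant of `M`, up to powers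
of `k`, with that of `k·I - BBᵀ = I - J`, which is `-k`. Every vertex lies on `k` edges and every
edge has two endpoints, so the all-ones vector is an eigenvector of `BᵀB` for `2k`, hence of `M`
for `-k` and of `M⁻¹` for `-1/k`; the grand sum of `M⁻¹` is therefore `-|E|/k`. -/

section Matrix

variable {m n R : Type*} [Fintype m] [DecidableEq m] [Fintype n] [DecidableEq n] [CommRing R]

theorem pow_card_mul_det_smul_one_sub_mul_comm (A : Matrix m n R) (B : Matrix n m R) (c : R) :
    c ^ Fintype.card n * (c • 1 - A * B).det = c ^ Fintype.card m * (c • 1 - B * A).det := by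
  simpa [eval_charpoly, smul_one_eq_diagonal] using congrArg (eval c) (charpoly_mul_comm' A B)

theorem det_one_sub_vecMulVec (u v : n → R) : (1 - vecMulVec u v).det = 1 - v ⬝ᵥ u := by
  rw [vecMulVec_eq Unit, det_one_sub_mul_comm, det_unique]
  simp

theorem smul_inv_mulVec_of_mulVec_eq_smul {A : Matrix n n R} (hA : IsUnit A.det) {v : n → R}
    {c : R} (h : A *ᵥ v = c • v) : c • A⁻¹ *ᵥ v = v := by
  rw [← mulVec_smul, ← h, mulVec_mulVec, nonsing_inv_mul A hA, one_mulVec]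

theorem mul_sum_inv_of_mulVec_one_eq_smul {A : Matrix n n R} (hA : IsUnit A.det) {c : R}
    (h : A *ᵥ 1 = c • 1) : c * ∑ i, ∑ j, A⁻¹ i j = Fintype.card n := by
  have row_sum (i : n) : c * ∑ j, A⁻¹ i j = 1 := by
    simpa [mulVec, dotProduct] using congrFun (smul_inv_mulVec_of_mulVec_eq_smul hA h) i
  simp [Finset.mul_sum Finset.univ (fun i => ∑ j, A⁻¹ i j), row_sum]

end Matrix

section IncMatrix

variable {V : Type*} [DecidableEq V]

theorem incMatrix_apply_of_isDiag {R : Type*} [MulZeroOneClass R] (G : SimpleGraph V)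
    [DecidableRel G.Adj] (v : V) {e : Sym2 V} (he : e.IsDiag) : G.incMatrix R v e = 0 :=
  G.incMatrix_of_notMem_incidenceSet fun h => G.not_isDiag_of_mem_edgeSet h.1 he

theorem incMatrix_top_mul_transpose (R : Type*) [Ring R] [Fintype V] :
    (⊤ : SimpleGraph V).incMatrix R * ((⊤ : SimpleGraph V).incMatrix R)ᵀ =
      ((Fintype.card V : R) - 2) • 1 + vecMulVec 1 1 := by
  ext v w
  have : Nonempty V := ⟨v⟩
  rw [SimpleGraph.incMatrix_mul_transpose]
  rcases eq_or_ne v w with rfl | hvw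
  · simp [Nat.cast_pred Fintype.card_pos, sub_add, ← one_add_one_eq_two]
  · simp [hvw]

end IncMatrix

theorem card_Edge (m : ℕ) : Fintype.card (Edge m) = m.choose 2 := by
  rw [← Fintype.card_fin m, ← Sym2.card_subtype_not_diag, Fintype.card_fin]
  exact Fintype.card_congr (Equiv.refl _)

theorem sum_Edge_eq_sum_sym2 {m : ℕ} {A : Type*} [AddCommMonoid A] {f : Sym2 (Fin m) → A}
    (hf : ∀ e, e.IsDiag → f e = 0) : ∑ e : Edge m, f e.val = ∑ e, f e := by
  refine Fintype.sum_of_injective _ Subtype.val_injective _ _ (fun e he => hf e ?_) fun _ => rfl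
  simpa [Edge] using he

section CompleteGraph

variable (k : ℕ)

theorem Bmat_apply_eq_incMatrix (v : Fin (k + 1)) (e : Edge (k + 1)) :
    Bmat k v e = (⊤ : SimpleGraph (Fin (k + 1))).incMatrix ℚ v e.val := by
  simp [Bmat, SimpleGraph.incMatrix_apply', SimpleGraph.incidenceSet, e.prop]

theorem Bmat_mul_transpose_eq_incMatrix :
    Bmat k * (Bmat k)ᵀ = (⊤ : SimpleGraph (Fin (k + 1))).incMatrix ℚ *
      ((⊤ : SimpleGraph (Fin (k + 1))).incMatrix ℚ)ᵀ := by
  ext v w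
  simp only [mul_apply, transpose_apply, Bmat_apply_eq_incMatrix]
  refine sum_Edge_eq_sum_sym2
    (f := fun e => SimpleGraph.incMatrix ℚ ⊤ v e * SimpleGraph.incMatrix ℚ ⊤ w e) fun e he => ?_
  rw [incMatrix_apply_of_isDiag _ v he, zero_mul]

theorem Bmat_mul_transpose : Bmat k * (Bmat k)ᵀ = ((k : ℚ) - 1) • 1 + vecMulVec 1 1 := by
  have hk : ((k + 1 : ℕ) : ℚ) - 2 = k - 1 := by
    push_cast
    ring
  rw [Bmat_mul_transpose_eq_incMatrix, incMatrix_top_mul_transpose, Fintype.card_fin, hk]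

theorem Bmat_mulVec_one : Bmat k *ᵥ 1 = (k : ℚ) • 1 := by
  ext v
  simp only [mulVec, dotProduct, Pi.one_apply, mul_one, Bmat_apply_eq_incMatrix]
  rw [sum_Edge_eq_sum_sym2 fun _ => incMatrix_apply_of_isDiag _ v, SimpleGraph.sum_incMatrix_apply]
  simp

theorem Bmat_transpose_mulVec_one : (Bmat k)ᵀ *ᵥ 1 = (2 : ℚ) • 1 := by
  ext e
  have he : e.val ∈ (⊤ : SimpleGraph (Fin (k + 1))).edgeSet := by simpa using e.prop
  simpa [mulVec, dotProduct, Bmat_apply_eq_incMatrix] using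
    SimpleGraph.sum_incMatrix_apply_of_mem_edgeSet (R := ℚ) _ he

theorem Mmat_eq_smul_one_sub : Mmat k = (k : ℚ) • 1 - (Bmat k)ᵀ * Bmat k := by
  rw [Mmat, Lmat]
  module

theorem Mmat_mulVec_one : Mmat k *ᵥ 1 = (-k : ℚ) • 1 := by
  rw [Mmat_eq_smul_one_sub, sub_mulVec, smul_mulVec, one_mulVec, ← mulVec_mulVec, Bmat_mulVec_one,
    mulVec_smul, Bmat_transpose_mulVec_one]
  module

theorem pow_mul_det_Mmat :
    (k : ℚ) ^ (k + 1) * (Mmat k).det = -(k : ℚ) ^ (Fintype.card (Edge (k + 1)) + 1) := by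
  have hBBt : (k : ℚ) • 1 - Bmat k * (Bmat k)ᵀ = 1 - vecMulVec 1 1 := by
    rw [Bmat_mul_transpose]
    module
  have h := pow_card_mul_det_smul_one_sub_mul_comm (Bmat k)ᵀ (Bmat k) k
  rw [hBBt, det_one_sub_vecMulVec, ← Mmat_eq_smul_one_sub] at h
  simpa [pow_succ] using h

end CompleteGraph

theorem isUnit_det_Mmat {k : ℕ} (hk : k ≠ 0) : IsUnit (Mmat k).det := by
  refine isUnit_iff_ne_zero.mpr fun hdet => ?_
  simpa [hdet, hk] using pow_mul_det_Mmat k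

/-- The matrix `M = (k-2)·I - L` is invertible and the grand sum of its inverse is
`-(k+1)/2`. -/
theorem grand_sum_inverse_M (k : ℕ) (hk : 1 ≤ k) :
    IsUnit (Mmat k).det ∧ ∑ i, ∑ j, (Mmat k)⁻¹ i j = -((k : ℚ) + 1) / 2 := by
  have hk0 : (k : ℚ) ≠ 0 := by positivity
  have hdet : IsUnit (Mmat k).det := isUnit_det_Mmat (Nat.one_le_iff_ne_zero.mp hk)
  refine ⟨hdet, mul_left_cancel₀ (neg_ne_zero.mpr hk0) ?_⟩
  rw [mul_sum_inv_of_mulVec_one_eq_smul hdet (Mmat_mulVec_one k), card_Edge, Nat.cast_choose_two]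
  push_cast
  ring

end ChordBubbles
end
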